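/- arXiv:2110.00769 — 3 statements merged into one kernel-verified Lean document; each statement's English description precedes it below -/
import Mathlib

section
/- Let q be a prime power, let t be an integer with 1 ≤ t ≤ q, set N = tq, and let k be an integer with 1 ≤ k ≤ ⌊(N+q−1)/(q+1)⌋. (a) There exists an MDS Hermitian self-orthogonal [N, k]_{q²} code, whose Hermitian dual has minimum distance k+1. (b) If k(q+1) = N−1, there exists an MDS Hermitian self-orthogonal [N+1, k+1]_{q²} code, whose Hermitian dual has minimum distance k+2. (c) If N−1+q ≠ k(q+1) ≠ N−1, there exist n' ∈ {N, N+1} and an MDS Hermitian self-orthogonal [n', k+1]_{q²} code, whose Hermitian dual has minimum distance k+2. -/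
/-!
Let `K` be the subfield with `q` elements and let `w : F → K` be a weight function. By surjectivity
of the norm, the support of `w` carries a generalized Reed–Solomon code in which the Hermitian
product of the evaluations of `X ^ i` and `X ^ j` is the moment `∑ x, w x * x ^ (i + q * j)`. Take
`w = f ∘ trace`, where `f` has degree `q - t` and vanishes on all but `t` elements of `K`: the
support has `t * q` points. Since the trace is `x + x ^ q`, the moment expands into power sums over
`F`, which vanish unless the exponent is a positive multiple of `q ^ 2 - 1`; this cannot happen when
`q - t + i + j < 2 * q - 2`. So there are self-orthogonal codes of dimension `k` whenever
`2 * k < q + t`. In dimension `k + 1` only the moment with `i = j = k` can survive. It lies in `K`,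
so if it is nonzero then its negative is a norm and it can be cancelled by adding the point at
infinity, at the cost of one more coordinate. For `t = q` and `k = q - 1` it is the power sum with
exponent `q ^ 2 - 1`, namely `-1`, so the longer code is the one that occurs.
-/

open scoped BigOperators

/-- A linear code `C ⊆ 𝔽_{q²}ⁿ` is Hermitian self-orthogonal if
`⟨c,c'⟩_H = ∑ i, c i * (c' i)^q = 0` for all codewords `c, c'`. -/
def IsHermSelfOrth (q : ℕ) {F : Type*} [Field F] {n : ℕ}
    (C : Submodule F (Fin n → F)) : Prop :=
  ∀ c ∈ C, ∀ c' ∈ C, ∑ i, c i * (c' i) ^ q = 0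

/-- The minimum Hamming distance of the code `C` equals `d`. -/
def MinDistEq {F : Type*} [Field F] {n : ℕ}
    (C : Submodule F (Fin n → F)) (d : ℕ) : Prop :=
  (∀ c ∈ C, c ≠ 0 → d ≤ Set.ncard {i | c i ≠ 0}) ∧
  (∃ c ∈ C, c ≠ 0 ∧ Set.ncard {i | c i ≠ 0} = d)

/-- The Hermitian dual `C^{⊥_H} = {x : ⟨x,c⟩_H = 0 for all c ∈ C}` of a code. -/
def hermDual (q : ℕ) {F : Type*} [Field F] {n : ℕ}
    (C : Submodule F (Fin n → F)) : Submodule F (Fin n → F) where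
  carrier := {x | ∀ c ∈ C, ∑ i, x i * (c i) ^ q = 0}
  add_mem' := by
    intro a b ha hb c hc
    have h1 := ha c hc
    have h2 := hb c hc
    calc ∑ i, (a + b) i * c i ^ q
        = ∑ i, (a i * c i ^ q + b i * c i ^ q) := by
          simp [add_mul]
      _ = 0 := by rw [Finset.sum_add_distrib, h1, h2, add_zero]
  zero_mem' := by intro c hc; simp
  smul_mem' := by
    intro r x hx c hc
    have h := hx c hc
    calc ∑ i, (r • x) i * c i ^ q = r * ∑ i, x i * c i ^ q := by
          simp [Finset.mul_sum, mul_assoc]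
      _ = 0 := by rw [h, mul_zero]

open Polynomial Module

section MDS

variable {F : Type*} [Field F] {n : ℕ} {C : Submodule F (Fin n → F)} {T : Finset (Fin n)}

/-- MDS codes, through the equivalent condition that a nonzero codeword has fewer zeros than the
dimension of the code; unlike the equality in the Singleton bound, it also makes sense for the zero
code. -/
def IsMDS (C : Submodule F (Fin n → F)) : Prop :=
  ∀ c ∈ C, c ≠ 0 → {i | c i = 0}.ncard < finrank F C

theorem ncard_zeros_add_ncard_support (c : Fin n → F) :
    {i | c i = 0}.ncard + {i | c i ≠ 0}.ncard = n := by
  simpa [Set.compl_ofPred] using Set.ncard_add_ncard_compl {i | c i = 0}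

theorem card_le_ncard_zeros {c : Fin n → F} (hc : ∀ i ∈ T, c i = 0) :
    T.card ≤ {i | c i = 0}.ncard := by
  rw [← Set.ncard_coe_finset T]
  exact Set.ncard_le_ncard hc

theorem exists_mem_ne_zero_eq_zero_on (C : Submodule F (Fin n → F))
    (hT : T.card < finrank F C) : ∃ c ∈ C, c ≠ 0 ∧ ∀ i ∈ T, c i = 0 := by
  let restrict : C →ₗ[F] (T → F) := (LinearMap.funLeft F F Subtype.val).domRestrict C
  have hker : LinearMap.ker restrict ≠ ⊥ := LinearMap.ker_ne_bot_of_finrank_lt (by simpa using hT)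
  obtain ⟨c, hc, hc0⟩ := Submodule.exists_mem_ne_zero_of_ne_bot hker
  exact ⟨c, c.2, by simpa using hc0, fun i hi => congrFun hc ⟨i, hi⟩⟩

theorem IsMDS.exists_mem_eq_on (hC : IsMDS C) (hT : T.card = finrank F C) (y : Fin n → F) :
    ∃ c ∈ C, ∀ i ∈ T, c i = y i := by
  let restrict : C →ₗ[F] (T → F) := (LinearMap.funLeft F F Subtype.val).domRestrict C
  have hinj : Function.Injective restrict := by
    refine (injective_iff_map_eq_zero restrict).2 fun c hc => ?_
    by_contra hc0
    have hzeros := card_le_ncard_zeros (T := T) (c := (c : Fin n → F))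
      fun i hi => congrFun hc ⟨i, hi⟩
    exact (hT ▸ hzeros).not_gt (hC c c.2 (by simpa using hc0))
  have hsurj : Function.Surjective restrict :=
    (LinearMap.injective_iff_surjective_of_finrank_eq_finrank (by simp [hT])).1 hinj
  obtain ⟨c, hc⟩ := hsurj fun i => y i
  exact ⟨c, c.2, fun i hi => congrFun hc ⟨i, hi⟩⟩

theorem IsMDS.minDistEq (hC : IsMDS C) (hpos : 0 < finrank F C) :
    MinDistEq C (n - finrank F C + 1) := by
  have hle : finrank F C ≤ n := by simpa using C.finrank_le
  have hbound : ∀ c ∈ C, c ≠ 0 → n - finrank F C + 1 ≤ {i | c i ≠ 0}.ncard := by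
    intro c hc hc0
    have := hC c hc hc0
    have := ncard_zeros_add_ncard_support c
    omega
  refine ⟨hbound, ?_⟩
  obtain ⟨T, -, hT⟩ := Finset.exists_subset_card_eq
    (show finrank F C - 1 ≤ (Finset.univ : Finset (Fin n)).card by rw [Finset.card_fin]; omega)
  obtain ⟨c, hc, hc0, hcT⟩ := exists_mem_ne_zero_eq_zero_on C (T := T) (by omega)
  have := hbound c hc hc0
  have := card_le_ncard_zeros hcT
  have := ncard_zeros_add_ncard_support c
  exact ⟨c, hc, hc0, by omega⟩

theorem IsMDS.eq_zero_of_mem_hermDual {m : ℕ} (hm : m ≠ 0) (hC : IsMDS C)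
    (hT : T.card = finrank F C) {x : Fin n → F} (hx : x ∈ hermDual m C)
    (hxT : ∀ i ∉ T, x i = 0) : x = 0 := by
  funext i
  by_cases hi : i ∈ T
  · obtain ⟨c, hc, hcT⟩ := hC.exists_mem_eq_on hT (Pi.single i 1)
    have hsum : ∑ j, x j * c j ^ m = x i := by
      rw [Finset.sum_eq_single i]
      · simp [hcT i hi]
      · intro j _ hji
        by_cases hj : j ∈ T
        · simp [hcT j hj, hji, hm]
        · simp [hxT j hj]
      · simp
    exact hsum ▸ hx c hc
  · exact hxT i hi

end MDS

section HermitianDual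

variable {K F : Type*} [Field K] [Fintype K] [Field F] [Algebra K F] {n : ℕ}
  {C : Submodule F (Fin n → F)}

local notation "q" => Fintype.card K

variable (K)

theorem mem_hermDual_span {S : Set (Fin n → F)} {x : Fin n → F} :
    x ∈ hermDual q (Submodule.span F S) ↔ ∀ y ∈ S, ∑ i, x i * y i ^ q = 0 := by
  refine ⟨fun hx y hy => hx y (Submodule.subset_span hy), fun hx y hy => ?_⟩
  induction hy using Submodule.span_induction with
  | mem y hy => exact hx y hy
  | zero => simp
  | add y z _ _ hy hz =>
    have hadd (i) : (y i + z i) ^ q = y i ^ q + z i ^ q :=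
      map_add (FiniteField.frobeniusAlgHom K F) _ _
    simp only [Pi.add_apply, hadd, mul_add, Finset.sum_add_distrib, hy, hz, add_zero]
  | smul a y _ hy =>
    simp only [Pi.smul_apply, smul_eq_mul, mul_pow, mul_left_comm _ (a ^ _), ← Finset.mul_sum, hy,
      mul_zero]

theorem isHermSelfOrth_span {S : Set (Fin n → F)}
    (hS : ∀ x ∈ S, ∀ y ∈ S, ∑ i, x i * y i ^ q = 0) :
    IsHermSelfOrth q (Submodule.span F S) := by
  have hle : Submodule.span F S ≤ hermDual q (Submodule.span F S) :=
    Submodule.span_le.2 fun x hx => (mem_hermDual_span K).2 (hS x hx)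
  exact fun _ hx => hle hx

theorem le_finrank_add_finrank_hermDual (C : Submodule F (Fin n → F)) :
    n ≤ finrank F C + finrank F (hermDual q C) := by
  let b := finBasis F C
  let pairing : (Fin n → F) →ₗ[F] (Fin (finrank F C) → F) :=
    Matrix.mulVecLin (Matrix.of fun j i => (b j : Fin n → F) i ^ q)
  have hspan : Submodule.span F (Set.range fun j => (b j : Fin n → F)) = C := by
    have := congrArg (Submodule.map C.subtype) b.span_eq
    rwa [Submodule.map_span, ← Set.range_comp, Submodule.map_top, Submodule.range_subtype] at this
  have hker : LinearMap.ker pairing ≤ hermDual q C := by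
    intro x hx
    rw [← hspan, mem_hermDual_span]
    rintro _ ⟨j, rfl⟩
    simpa [pairing, Matrix.mulVec, dotProduct, mul_comm] using congrFun hx j
  have hrank := pairing.finrank_range_add_finrank_ker
  have hrange := (LinearMap.range pairing).finrank_le
  have := Submodule.finrank_mono hker
  simp only [finrank_fin_fun] at hrank hrange
  omega

theorem IsMDS.finrank_add_finrank_hermDual (hC : IsMDS C) :
    finrank F C + finrank F (hermDual q C) = n := by
  refine le_antisymm ?_ (le_finrank_add_finrank_hermDual K C)
  by_contra! hlt
  have hle : finrank F C ≤ n := by simpa using C.finrank_le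
  obtain ⟨T, -, hT⟩ := Finset.exists_subset_card_eq
    (show finrank F C ≤ (Finset.univ : Finset (Fin n)).card by simpa)
  obtain ⟨x, hx, hx0, hxT⟩ := exists_mem_ne_zero_eq_zero_on (hermDual q C) (T := Tᶜ) (by
    rw [Finset.card_compl, Fintype.card_fin]; omega)
  exact hx0 (hC.eq_zero_of_mem_hermDual Fintype.card_ne_zero hT hx (by simpa using hxT))

theorem isMDS_hermDual (hC : IsMDS C) : IsMDS (hermDual q C) := by
  intro x hx hx0
  by_contra! hzeros
  have hsum := hC.finrank_add_finrank_hermDual K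
  have hsupport := ncard_zeros_add_ncard_support x
  obtain ⟨T, hST, hT⟩ := Finset.exists_superset_card_eq
    (s := {i | x i ≠ 0}.toFinite.toFinset) (n := finrank F C)
    (by rw [← Set.ncard_eq_toFinset_card]; omega) (by rw [Fintype.card_fin]; omega)
  refine hx0 (hC.eq_zero_of_mem_hermDual Fintype.card_ne_zero hT hx fun i hi => ?_)
  by_contra hxi
  exact hi (hST (by simpa using hxi))

end HermitianDual

section Existence

/-- There is an MDS Hermitian self-orthogonal `[n, k]` code over `F` whose Hermitian dual has
minimum distance `k + 1`. -/
def HasHermMDS (F : Type*) [Field F] (q n k : ℕ) : Prop :=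
  ∃ C : Submodule F (Fin n → F), finrank F C = k ∧ IsHermSelfOrth q C ∧
    MinDistEq C (n - k + 1) ∧ MinDistEq (hermDual q C) (k + 1)

variable (K : Type*) {F : Type*} [Field K] [Fintype K] [Field F] [Algebra K F] {n k : ℕ}

theorem IsMDS.hasHermMDS {C : Submodule F (Fin n → F)} (hC : IsMDS C)
    (hself : IsHermSelfOrth (Fintype.card K) C) (hpos : 0 < finrank F C) (hlt : finrank F C < n) :
    HasHermMDS F (Fintype.card K) n (finrank F C) := by
  have hsum := hC.finrank_add_finrank_hermDual K
  have hdual : n - finrank F (hermDual (Fintype.card K) C) + 1 = finrank F C + 1 := by omega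
  exact ⟨C, rfl, hself, hC.minDistEq hpos, hdual ▸ (isMDS_hermDual K hC).minDistEq (by omega)⟩

end Existence

section PolynomialCode

variable {F : Type*} [Field F] {n k : ℕ} {L : Fin n → F[X] →ₗ[F] F}

/-- The code of the words `(L₁ p, …, Lₙ p)`, where `p` runs over the polynomials of degree less than
`k`. Evaluations give Reed–Solomon codes, and the coefficient functional supplies the coordinate at
infinity of their extensions. -/
noncomputable def polyCode (L : Fin n → F[X] →ₗ[F] F) (k : ℕ) : Submodule F (Fin n → F) :=
  (degreeLT F k).map (LinearMap.pi L)

theorem polyCode_eq_span (L : Fin n → F[X] →ₗ[F] F) (k : ℕ) :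
    polyCode L k = Submodule.span F {c | ∃ i < k, c = fun l => L l (X ^ i)} := by
  classical
  rw [polyCode, degreeLT_eq_span_X_pow, Submodule.map_span]
  congr 1
  ext c
  simp [eq_comm, funext_iff]

theorem isHermSelfOrth_polyCode (K : Type*) [Field K] [Fintype K] [Algebra K F]
    (horth : ∀ i < k, ∀ j < k, ∑ l, L l (X ^ i) * L l (X ^ j) ^ Fintype.card K = 0) :
    IsHermSelfOrth (Fintype.card K) (polyCode L k) := by
  rw [polyCode_eq_span]
  refine isHermSelfOrth_span K ?_
  rintro _ ⟨i, hi, rfl⟩ _ ⟨j, hj, rfl⟩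
  exact horth i hi j hj

theorem finrank_polyCode (hkn : k ≤ n)
    (hzeros : ∀ p ∈ degreeLT F k, p ≠ 0 → {l | L l p = 0}.ncard < k) :
    finrank F (polyCode L k) = k := by
  have hinj : Function.Injective ((LinearMap.pi L).domRestrict (degreeLT F k)) := by
    refine (injective_iff_map_eq_zero _).2 fun p hp => ?_
    by_contra hp0
    have hall : {l | L l (p : F[X]) = 0} = Set.univ := Set.eq_univ_of_forall fun l => congrFun hp l
    have := hzeros p p.2 (by simpa using hp0)
    rw [hall, Set.ncard_univ, Nat.card_fin] at this
    omega
  rw [polyCode, ← LinearMap.range_domRestrict, LinearMap.finrank_range_of_inj hinj,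
    (degreeLTEquiv F k).finrank_eq, finrank_fin_fun]

theorem isMDS_polyCode (hkn : k ≤ n)
    (hzeros : ∀ p ∈ degreeLT F k, p ≠ 0 → {l | L l p = 0}.ncard < k) :
    IsMDS (polyCode L k) := by
  rintro _ ⟨p, hp, rfl⟩ hc0
  rw [finrank_polyCode hkn hzeros]
  exact hzeros p hp fun hp0 => hc0 (by simp [hp0])

theorem hasHermMDS_of_polyCode (K : Type*) [Field K] [Fintype K] [Algebra K F]
    (hk : 0 < k) (hkn : k < n)
    (hzeros : ∀ p ∈ degreeLT F k, p ≠ 0 → {l | L l p = 0}.ncard < k)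
    (horth : ∀ i < k, ∀ j < k, ∑ l, L l (X ^ i) * L l (X ^ j) ^ Fintype.card K = 0) :
    HasHermMDS F (Fintype.card K) n k := by
  have hdim := finrank_polyCode hkn.le hzeros
  have hcode := (isMDS_polyCode hkn.le hzeros).hasHermMDS K (isHermSelfOrth_polyCode K horth)
  rw [hdim] at hcode
  exact hcode hk hkn

theorem ncard_eval_zeros_le {α v : Fin n → F} (hα : Function.Injective α) (hv : ∀ l, v l ≠ 0)
    {p : F[X]} (hp : p ≠ 0) : {l | (v l • leval (α l)) p = 0}.ncard ≤ p.natDegree := by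
  classical
  have hroots : α '' {l | (v l • leval (α l)) p = 0} ⊆ p.roots.toFinset := by
    rintro _ ⟨l, hl, rfl⟩
    simpa [hp, hv l] using hl
  calc {l | (v l • leval (α l)) p = 0}.ncard
      = (α '' {l | (v l • leval (α l)) p = 0}).ncard := (Set.ncard_image_of_injective _ hα).symm
    _ ≤ p.roots.toFinset.card := by
      simpa only [Set.ncard_coe_finset] using Set.ncard_le_ncard hroots
    _ ≤ p.natDegree := p.roots.toFinset_card_le.trans p.card_roots'

/-- The functionals of a generalized Reed–Solomon code extended by the point at infinity, which
comes first and reads off the coefficient of `X ^ k`. -/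
noncomputable def extendedEval (ω : F) (v α : Fin n → F) (k : ℕ) : Fin (n + 1) → F[X] →ₗ[F] F :=
  Fin.cons (ω • lcoeff F k) fun l => v l • leval (α l)

theorem ncard_extendedEval_zeros_le {ω : F} (hω : ω ≠ 0) {α v : Fin n → F}
    (hα : Function.Injective α) (hv : ∀ l, v l ≠ 0) {p : F[X]} (hp : p ≠ 0)
    (hdeg : p.natDegree ≤ k) : {l | extendedEval ω v α k l p = 0}.ncard ≤ k := by
  have hfinite := ncard_eval_zeros_le hα hv hp
  set Z : Set (Fin n) := {l | (v l • leval (α l)) p = 0}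
  by_cases hk : p.coeff k = 0
  · have hlt : p.natDegree < k := hdeg.lt_of_ne fun h =>
      hp (leadingCoeff_eq_zero.1 (by rwa [leadingCoeff, h]))
    have hsub : {l | extendedEval ω v α k l p = 0} ⊆ insert 0 (Fin.succ '' Z) := by
      intro l hl
      cases l using Fin.cases with
      | zero => exact Set.mem_insert _ _
      | succ l => exact Set.mem_insert_of_mem _ ⟨l, hl, rfl⟩
    calc {l | extendedEval ω v α k l p = 0}.ncard
        ≤ (insert 0 (Fin.succ '' Z)).ncard := Set.ncard_le_ncard hsub
      _ ≤ (Fin.succ '' Z).ncard + 1 := Set.ncard_insert_le _ _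
      _ ≤ Z.ncard + 1 := Nat.add_le_add_right Set.ncard_image_le 1
      _ ≤ k := by omega
  · have hsub : {l | extendedEval ω v α k l p = 0} ⊆ Fin.succ '' Z := by
      intro l hl
      cases l using Fin.cases with
      | zero => exact absurd hl (mul_ne_zero hω hk)
      | succ l => exact ⟨l, hl, rfl⟩
    calc {l | extendedEval ω v α k l p = 0}.ncard
        ≤ (Fin.succ '' Z).ncard := Set.ncard_le_ncard hsub
      _ ≤ Z.ncard := Set.ncard_image_le
      _ ≤ k := hfinite.trans hdeg

end PolynomialCode

section PowerSums

variable {F : Type*} [Field F] [Fintype F]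

theorem sum_pow_eq_ite {i : ℕ} (hi : i ≠ 0) :
    ∑ x : F, x ^ i = if Fintype.card F - 1 ∣ i then -1 else 0 := by
  classical
  rw [← FiniteField.sum_pow_units F i]
  refine (Fintype.sum_of_injective Units.val Units.val_injective _ _ ?_ fun _ => rfl).symm
  intro x hx
  have hx0 : x = 0 := by
    by_contra h
    exact hx ⟨Units.mk0 x h, rfl⟩
  rw [hx0, zero_pow hi]

-- With `r = q - 1`, divisibility by `r` forces `a + b ∈ {0, r}`, and divisibility by `r + 2`
-- excludes `a + b = r`.
theorem add_mul_eq_zero_of_sq_sub_one_dvd {q a b : ℕ} (hlt : a + b + 2 < 2 * q)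
    (hdvd : q ^ 2 - 1 ∣ a + q * b) : a + q * b = 0 := by
  obtain ⟨r, rfl⟩ : ∃ r, q = r + 1 := ⟨q - 1, by omega⟩
  have hfactor : (r + 1) ^ 2 - 1 = r * (r + 2) := by
    rw [show (r + 1) ^ 2 = r * (r + 2) + 1 by ring, Nat.add_sub_cancel]
  rw [hfactor] at hdvd
  have hr : r ∣ a + b := by
    have h := (Dvd.intro _ rfl).trans hdvd
    rw [show a + (r + 1) * b = a + b + r * b by ring] at h
    exact (Nat.dvd_add_left (dvd_mul_right r b)).1 h
  by_contra hne
  have hab : a + b = r := by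
    refine Nat.eq_of_dvd_of_lt_two_mul (fun h => hne ?_) hr (by omega)
    obtain ⟨rfl, rfl⟩ : a = 0 ∧ b = 0 := by omega
    simp
  have hr0 : 0 < r := by
    rcases Nat.eq_zero_or_pos r with rfl | h
    · exact absurd (by simpa using hab) hne
    · exact h
  have hb : r + 2 ∣ b + 1 := by
    refine Nat.dvd_of_mul_dvd_mul_left hr0 ?_
    rwa [show r * (b + 1) = a + (r + 1) * b by rw [← hab]; ring]
  exact absurd (Nat.le_of_dvd b.succ_pos hb) (by omega)

theorem sum_pow_add_mul_eq_zero {q a b : ℕ} (hF : Fintype.card F = q ^ 2)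
    (hlt : a + b + 2 < 2 * q) : ∑ x : F, x ^ (a + q * b) = 0 := by
  by_cases h0 : a + q * b = 0
  · simp [h0]
  · rw [sum_pow_eq_ite h0, if_neg]
    exact fun h => h0 (add_mul_eq_zero_of_sq_sub_one_dvd hlt (hF ▸ h))

end PowerSums

theorem card_filter_mem_mul_card {A B : Type*} [AddGroup A] [Fintype A] [AddMonoid B] [Fintype B]
    [DecidableEq B] {f : A →+ B} (hf : Function.Surjective f) (s : Finset B) :
    (Finset.univ.filter fun a => f a ∈ s).card * Fintype.card B = s.card * Fintype.card A := by
  have hcount (t : Finset B) : (Finset.univ.filter fun a => f a ∈ t).card =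
      t.card * (Finset.univ.filter fun a => f a = 0).card := by
    rw [← Finset.sum_card_fiberwise_eq_card_filter, ← smul_eq_mul]
    exact Finset.sum_eq_card_nsmul fun b _ =>
      AddMonoidHom.card_fiber_eq_of_mem_range f (hf b) (hf 0)
  have huniv := hcount Finset.univ
  simp only [Finset.mem_univ, Finset.filter_true, Finset.card_univ] at huniv
  rw [hcount, huniv]
  ring

section QuadraticExtension

variable {K F : Type*} [Field K] [Fintype K] [Field F] [Algebra K F]

local notation "q" => Fintype.card K

theorem card_eq_card_sq [Fintype F] (h2 : finrank K F = 2) : Fintype.card F = q ^ 2 := by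
  rw [card_eq_pow_finrank (K := K), h2]

section Finite

variable [Finite F]

theorem algebraMap_norm_eq_mul (h2 : finrank K F = 2) (x : F) :
    algebraMap K F (Algebra.norm K x) = x * x ^ q := by
  simp [FiniteField.algebraMap_norm_eq_prod_pow, h2, Finset.prod_range_succ]

theorem algebraMap_trace_eq_add (h2 : finrank K F = 2) (x : F) :
    algebraMap K F (Algebra.trace K F x) = x + x ^ q := by
  simp [FiniteField.algebraMap_trace_eq_sum_pow, h2, Finset.sum_range_succ]

theorem ncard_trace_mem (h2 : finrank K F = 2) (s : Finset K) :
    {x : F | Algebra.trace K F x ∈ s}.ncard = s.card * q := by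
  classical
  let _ := Fintype.ofFinite F
  have hcount := card_filter_mem_mul_card (f := (Algebra.trace K F).toAddMonoidHom)
    (Algebra.trace_surjective K F) s
  have hq : 0 < q := Fintype.card_pos
  refine Nat.eq_of_mul_eq_mul_right hq ?_
  rw [mul_assoc, ← sq, ← card_eq_card_sq h2, ← hcount, ← Set.ncard_coe_finset,
    Finset.coe_filter_univ]
  rfl

theorem exists_natDegree_add_eq_card (h2 : finrank K F = 2) {t : ℕ} (ht : t ≤ q) :
    ∃ f : K[X], f.natDegree + t = q ∧
      {x : F | f.eval (Algebra.trace K F x) ≠ 0}.ncard = t * q := by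
  classical
  obtain ⟨s, -, hs⟩ := Finset.exists_subset_card_eq
    (show t ≤ (Finset.univ : Finset K).card by simpa using ht)
  refine ⟨∏ c ∈ sᶜ, (X - C c), ?_, ?_⟩
  · rw [natDegree_finsetProd_X_sub_C_eq_card, Finset.card_compl, hs]
    omega
  · rw [← hs, ← ncard_trace_mem h2]
    congr 1
    ext x
    simp [eval_prod, Finset.prod_eq_zero_iff, sub_eq_zero]

end Finite

section Moments

variable [Fintype F]

/-- The Hermitian product of the evaluation vectors of `X ^ i` and `X ^ j` when the point `x` is
given weight `w x`. -/
def hermMoment (w : F → K) (i j : ℕ) : F :=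
  ∑ x, algebraMap K F (w x) * (x ^ i * (x ^ j) ^ q)

theorem hermMoment_self (h2 : finrank K F = 2) (w : F → K) (i : ℕ) :
    hermMoment w i i = algebraMap K F (∑ x, w x * Algebra.norm K x ^ i) := by
  simp [hermMoment, algebraMap_norm_eq_mul h2, mul_pow, pow_right_comm]

theorem exists_sum_eq_hermMoment (h2 : finrank K F = 2) {n : ℕ} {w : F → K}
    (hw : {x | w x ≠ 0}.ncard = n) :
    ∃ α v : Fin n → F, Function.Injective α ∧ (∀ l, v l ≠ 0) ∧
      ∀ i j, ∑ l, (v l * α l ^ i) * (v l * α l ^ j) ^ q = hermMoment w i j := by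
  classical
  let e : Fin n ≃ {x | w x ≠ 0} := (Finite.equivFinOfCardEq hw).symm
  choose v hv using fun l => FiniteField.norm_surjective K F (w (e l))
  have hα : Function.Injective fun l => (e l : F) := Subtype.val_injective.comp e.injective
  refine ⟨fun l => e l, v, hα, fun l hl => (e l).2 ?_, fun i j => ?_⟩
  · rw [← hv l, hl, Algebra.norm_zero]
  · refine Fintype.sum_of_injective _ hα _ _ (fun x hx => ?_) fun l => ?_
    · have hwx : w x = 0 := by
        by_contra h
        exact hx ⟨e.symm ⟨x, h⟩, by simp⟩
      rw [hwx, map_zero, zero_mul]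
    · rw [← hv l, algebraMap_norm_eq_mul h2]
      ring

theorem hasHermMDS_of_hermMoment_eq_zero (h2 : finrank K F = 2) {n k : ℕ} {w : F → K}
    (hw : {x | w x ≠ 0}.ncard = n) (hk : 0 < k) (hkn : k < n)
    (hmoment : ∀ i < k, ∀ j < k, hermMoment w i j = 0) : HasHermMDS F q n k := by
  obtain ⟨α, v, hα, hv, hsum⟩ := exists_sum_eq_hermMoment h2 hw
  refine hasHermMDS_of_polyCode (L := fun l => v l • leval (α l)) K hk hkn ?_ ?_
  · intro p hp hp0
    have hdeg := (natDegree_lt_iff_degree_lt hp0).2 (mem_degreeLT.1 hp)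
    exact (ncard_eval_zeros_le hα hv hp0).trans_lt hdeg
  · intro i hi j hj
    simpa using (hsum i j).trans (hmoment i hi j hj)

theorem hasHermMDS_succ_of_hermMoment_ne_zero (h2 : finrank K F = 2) {n k : ℕ} {w : F → K}
    (hw : {x | w x ≠ 0}.ncard = n) (hkn : k < n)
    (hmoment : ∀ i ≤ k, ∀ j ≤ k, i + j < 2 * k → hermMoment w i j = 0)
    (htop : hermMoment w k k ≠ 0) : HasHermMDS F q (n + 1) (k + 1) := by
  obtain ⟨α, v, hα, hv, hsum⟩ := exists_sum_eq_hermMoment h2 hw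
  obtain ⟨ω, hω⟩ : ∃ ω : F, ω * ω ^ q = -hermMoment w k k := by
    obtain ⟨ω, hω⟩ := FiniteField.norm_surjective K F (-∑ x, w x * Algebra.norm K x ^ k)
    exact ⟨ω, by rw [← algebraMap_norm_eq_mul h2, hω, map_neg, hermMoment_self h2]⟩
  have hω0 : ω ≠ 0 := by
    rintro rfl
    exact htop (by simpa using hω)
  refine hasHermMDS_of_polyCode (L := extendedEval ω v α k) K k.succ_pos (by omega) ?_ ?_
  · intro p hp hp0
    have hdeg := (natDegree_lt_iff_degree_lt hp0).2 (mem_degreeLT.1 hp)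
    exact Nat.lt_succ_of_le (ncard_extendedEval_zeros_le hω0 hα hv hp0 (Nat.le_of_lt_succ hdeg))
  · intro i hi j hj
    have hsplit : ∑ l, extendedEval ω v α k l (X ^ i) * extendedEval ω v α k l (X ^ j) ^ q =
        (if k = i then ω else 0) * (if k = j then ω else 0) ^ q + hermMoment w i j := by
      simp [Fin.sum_univ_succ, extendedEval, hsum, coeff_X_pow]
    rw [hsplit]
    rcases Nat.lt_or_ge (i + j) (2 * k) with hij | hij
    · have : k ≠ i ∨ k ≠ j := by omega
      rw [hmoment i (by omega) j (by omega) hij]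
      rcases this with h | h <;> simp [h]
    · obtain ⟨rfl, rfl⟩ : i = k ∧ j = k := by omega
      simp [hω]

theorem sum_trace_pow_mul_eq_zero (h2 : finrank K F = 2) {r i j : ℕ}
    (hlt : r + i + j + 2 < 2 * q) :
    ∑ x : F, algebraMap K F (Algebra.trace K F x) ^ r * (x ^ i * (x ^ j) ^ q) = 0 := by
  have hexpand (x : F) : algebraMap K F (Algebra.trace K F x) ^ r * (x ^ i * (x ^ j) ^ q) =
      ∑ m ∈ Finset.range (r + 1), (r.choose m : F) * x ^ ((m + i) + q * (r - m + j)) := by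
    rw [algebraMap_trace_eq_add h2, add_pow, Finset.sum_mul]
    exact Finset.sum_congr rfl fun m _ => by ring
  simp only [hexpand]
  rw [Finset.sum_comm]
  refine Finset.sum_eq_zero fun m hm => ?_
  have := Finset.mem_range.1 hm
  rw [← Finset.mul_sum, sum_pow_add_mul_eq_zero (card_eq_card_sq h2) (by omega), mul_zero]

theorem hermMoment_eval_trace_eq_zero (h2 : finrank K F = 2) {f : K[X]} {i j : ℕ}
    (hlt : f.natDegree + i + j + 2 < 2 * q) :
    hermMoment (fun x : F => f.eval (Algebra.trace K F x)) i j = 0 := by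
  simp only [hermMoment, ← aeval_algebraMap_apply_eq_algebraMap_eval, aeval_eq_sum_range,
    Finset.sum_mul, smul_mul_assoc]
  rw [Finset.sum_comm]
  refine Finset.sum_eq_zero fun r hr => ?_
  have := Finset.mem_range.1 hr
  rw [← Finset.smul_sum, sum_trace_pow_mul_eq_zero h2 (by omega), smul_zero]

theorem hermMoment_one_card_sub_one (h2 : finrank K F = 2) :
    hermMoment (fun _ : F => (1 : K)) (q - 1) (q - 1) = -1 := by
  have hexp : q - 1 + (q - 1) * q = Fintype.card F - 1 := by
    rw [card_eq_card_sq h2, sq, Nat.sub_mul, one_mul]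
    have := Nat.le_mul_self q
    have : 0 < q := Fintype.card_pos
    omega
  have hF : 1 < Fintype.card F := Fintype.one_lt_card
  simp only [hermMoment, map_one, one_mul, ← pow_mul, ← pow_add, hexp]
  rw [sum_pow_eq_ite (by omega), if_pos dvd_rfl]

end Moments

variable [Finite F]

theorem hasHermMDS_mul (h2 : finrank K F = 2) {t k : ℕ} (ht1 : 1 ≤ t) (ht2 : t ≤ q) (hk1 : 1 ≤ k)
    (hk2 : 2 * k < q + t) : HasHermMDS F q (t * q) k := by
  let _ := Fintype.ofFinite F
  obtain ⟨f, hdeg, hsupport⟩ := exists_natDegree_add_eq_card h2 ht2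
  refine hasHermMDS_of_hermMoment_eq_zero h2 hsupport hk1 (by nlinarith) fun i hi j hj => ?_
  exact hermMoment_eval_trace_eq_zero h2 (by omega)

theorem hasHermMDS_mul_or_mul_add_one (h2 : finrank K F = 2) {t k : ℕ} (ht1 : 1 ≤ t) (ht2 : t ≤ q)
    (hk : 2 * k + 1 < q + t) :
    HasHermMDS F q (t * q) (k + 1) ∨ HasHermMDS F q (t * q + 1) (k + 1) := by
  let _ := Fintype.ofFinite F
  obtain ⟨f, hdeg, hsupport⟩ := exists_natDegree_add_eq_card h2 ht2
  have hq : 1 < q := Fintype.one_lt_card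
  have hkn : k + 1 < t * q := by nlinarith
  have hmoment : ∀ i ≤ k, ∀ j ≤ k, i + j < 2 * k →
      hermMoment (fun x : F => f.eval (Algebra.trace K F x)) i j = 0 := fun i _ j _ hij =>
    hermMoment_eval_trace_eq_zero h2 (by omega)
  by_cases htop : hermMoment (fun x : F => f.eval (Algebra.trace K F x)) k k = 0
  · refine .inl (hasHermMDS_of_hermMoment_eq_zero h2 hsupport k.succ_pos hkn fun i hi j hj => ?_)
    rcases Nat.lt_or_ge (i + j) (2 * k) with hij | hij
    · exact hmoment i (by omega) j (by omega) hij
    · obtain ⟨rfl, rfl⟩ : i = k ∧ j = k := by omega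
      exact htop
  · exact .inr (hasHermMDS_succ_of_hermMoment_ne_zero h2 hsupport (by omega) hmoment htop)

theorem hasHermMDS_card_sq_add_one (h2 : finrank K F = 2) : HasHermMDS F q (q * q + 1) q := by
  let _ := Fintype.ofFinite F
  have hq : 1 < q := Fintype.one_lt_card
  have hsupport : {_x : F | (1 : K) ≠ 0}.ncard = q * q := by
    simp [card_eq_card_sq h2, sq]
  have hmoment : ∀ i ≤ q - 1, ∀ j ≤ q - 1, i + j < 2 * (q - 1) →
      hermMoment (fun _ : F => (1 : K)) i j = 0 := fun i _ j _ hij => by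
    simpa using hermMoment_eval_trace_eq_zero h2 (f := (1 : K[X])) (i := i) (j := j) (by
      rw [natDegree_one]; omega)
  have hcode := hasHermMDS_succ_of_hermMoment_ne_zero h2 hsupport (by nlinarith [Nat.sub_le q 1])
    hmoment (by simp [hermMoment_one_card_sub_one h2])
  rwa [Nat.sub_add_cancel hq.le] at hcode

end QuadraticExtension

theorem exists_subfield_natCard_eq {F : Type*} [Field F] [Fintype F] {q d : ℕ} (hd : d ≠ 0)
    (hF : Fintype.card F = q ^ d) : ∃ K : Subfield F, Nat.card K = q := by
  obtain ⟨p, _, n, hp, hcard⟩ := FiniteField.card' F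
  have : Fact p.Prime := ⟨hp⟩
  obtain ⟨m, -, rfl⟩ := (Nat.dvd_prime_pow hp).1 (hcard ▸ hF ▸ dvd_pow_self q hd)
  have hn : (n : ℕ) = m * d := Nat.pow_right_injective hp.two_le (by
    simpa only [pow_mul] using hcard.symm.trans hF)
  have hm : m ≠ 0 := fun h => n.ne_zero (by rw [hn, h, zero_mul])
  let _ : Algebra (ZMod p) F := ZMod.algebra F p
  have hfinrank : finrank (ZMod p) F = n := Nat.pow_right_injective hp.two_le (by
    simpa [hcard] using FiniteField.pow_finrank_eq_natCard p F)
  obtain ⟨φ⟩ := FiniteField.nonempty_algHom_of_finrank_dvd (F := ZMod p) (K := GaloisField p m)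
    (L := F) (by rw [GaloisField.finrank p hm, hfinrank, hn]; exact dvd_mul_right m d)
  refine ⟨φ.toRingHom.fieldRange, ?_⟩
  rw [← GaloisField.card p m hm]
  exact (Nat.card_congr (Equiv.ofInjective φ φ.injective)).symm

section Parameters

variable {q t k : ℕ}

theorem mul_succ_lt_of_le_div (hk : k ≤ (t * q + q - 1) / (q + 1)) (hq : 0 < q) :
    k * (q + 1) < (t + 1) * q := by
  have hle := (Nat.le_div_iff_mul_le (Nat.add_pos_right q one_pos)).1 hk
  have hexpand : (t + 1) * q = t * q + q := by ring
  omega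

theorem le_of_mul_succ_lt (h : k * (q + 1) < (t + 1) * q) : k ≤ t := by
  nlinarith

theorem two_mul_lt_add_of_mul_succ_lt (htq : t ≤ q) (h : k * (q + 1) < (t + 1) * q) :
    2 * k < q + t := by
  have hkt := le_of_mul_succ_lt h
  by_contra! hge
  obtain ⟨rfl, rfl⟩ : k = q ∧ t = q := by omega
  exact h.ne (mul_comm _ _)

theorem eq_and_succ_eq_of_mul_succ_eq (ht : 1 ≤ t) (htq : t ≤ q) (h : k * (q + 1) = t * q - 1) :
    t = q ∧ k + 1 = q := by
  have hpos : 0 < t * q := Nat.mul_pos ht (ht.trans htq)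
  have hsucc : k * (q + 1) + 1 = t * q := by omega
  have hlt : k < t := by nlinarith
  obtain ⟨d, rfl⟩ := Nat.exists_eq_add_of_lt hlt
  have hk : k + 1 = (d + 1) * q := by
    have : (k + d + 1) * q = k * q + (d + 1) * q := by ring
    have : k * (q + 1) = k * q + k := by ring
    omega
  have hd : d = 0 := by nlinarith
  subst hd
  omega

theorem two_mul_succ_ne_of_mul_succ_ne (ht : 1 ≤ t) (htq : t ≤ q) (hkt : k ≤ t)
    (h : t * q - 1 + q ≠ k * (q + 1)) : 2 * k + 1 ≠ q + t := by
  intro heq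
  obtain ⟨rfl, rfl⟩ : t = k ∧ q = k + 1 := by omega
  apply h
  have : 0 < t * (t + 1) := by positivity
  have : t * (t + 1 + 1) = t * (t + 1) + t := by ring
  omega

end Parameters

theorem stmt15_general {q t k : ℕ} (ht1 : 1 ≤ t) (ht2 : t ≤ q) (hk1 : 1 ≤ k)
    (hk2 : 2 * k < q + t) (F : Type*) [Field F] [Fintype F] (hF : Fintype.card F = q ^ 2) :
    HasHermMDS F q (t * q) k ∧
    (t = q ∧ k + 1 = q → HasHermMDS F q (t * q + 1) (k + 1)) ∧
    (2 * k + 1 ≠ q + t →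
      ∃ n', (n' = t * q ∨ n' = t * q + 1) ∧ HasHermMDS F q n' (k + 1)) := by
  obtain ⟨K, hK⟩ := exists_subfield_natCard_eq two_ne_zero hF
  let _ : Fintype K := Fintype.ofFinite K
  obtain rfl : Fintype.card K = q := by rw [← Nat.card_eq_fintype_card, hK]
  have h2 : finrank K F = 2 := Nat.pow_right_injective Fintype.one_lt_card
    (card_eq_pow_finrank.symm.trans hF)
  refine ⟨hasHermMDS_mul h2 ht1 ht2 hk1 hk2, ?_, fun hne => ?_⟩
  · rintro ⟨rfl, hk⟩
    exact hk ▸ hasHermMDS_card_sq_add_one h2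
  · rcases hasHermMDS_mul_or_mul_add_one h2 ht1 ht2 (show 2 * k + 1 < _ by omega) with h | h
    · exact ⟨_, .inl rfl, h⟩
    · exact ⟨_, .inr rfl, h⟩

/-- MDS quantum theorem (classical form) for lengths `N = tq`, `1 ≤ t ≤ q`,
`1 ≤ k ≤ ⌊(N+q−1)/(q+1)⌋`:
(a) an MDS Hermitian self-orthogonal `[N,k]` code with dual distance `k+1` exists;
(b) if `k(q+1) = N−1`, an MDS Hermitian self-orthogonal `[N+1,k+1]` code with dual
distance `k+2` exists; (c) if `N−1+q ≠ k(q+1) ≠ N−1`, such a code of length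
`n' ∈ {N, N+1}` exists. -/
theorem stmt15 (q t : ℕ) (hq : IsPrimePow q) (ht1 : 1 ≤ t) (ht2 : t ≤ q)
    (N : ℕ) (hN : N = t * q)
    (k : ℕ) (hk1 : 1 ≤ k) (hk2 : k ≤ (N + q - 1) / (q + 1))
    (F : Type*) [Field F] [Fintype F] (hF : Fintype.card F = q ^ 2) :
    (∃ C : Submodule F (Fin N → F),
      Module.finrank F C = k ∧ IsHermSelfOrth q C ∧
      MinDistEq C (N - k + 1) ∧ MinDistEq (hermDual q C) (k + 1)) ∧
    (k * (q + 1) = N - 1 →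
      ∃ C : Submodule F (Fin (N + 1) → F),
        Module.finrank F C = k + 1 ∧ IsHermSelfOrth q C ∧
        MinDistEq C ((N + 1) - (k + 1) + 1) ∧
        MinDistEq (hermDual q C) (k + 2)) ∧
    (N - 1 + q ≠ k * (q + 1) → k * (q + 1) ≠ N - 1 →
      ∃ n' : ℕ, (n' = N ∨ n' = N + 1) ∧
        ∃ C : Submodule F (Fin n' → F),
          Module.finrank F C = k + 1 ∧ IsHermSelfOrth q C ∧
          MinDistEq C (n' - (k + 1) + 1) ∧
          MinDistEq (hermDual q C) (k + 2)) := by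
  subst hN
  have hlt := mul_succ_lt_of_le_div hk2 (ht1.trans ht2)
  obtain ⟨ha, hb, hc⟩ := stmt15_general ht1 ht2 hk1 (two_mul_lt_add_of_mul_succ_lt ht2 hlt) F hF
  exact ⟨ha, fun h => hb (eq_and_succ_eq_of_mul_succ_eq ht1 ht2 h),
    fun h _ => hc (two_mul_succ_ne_of_mul_succ_ne ht1 ht2 (le_of_mul_succ_lt hlt) h)⟩
end

section
/- Let q be a prime power and n ≥ 2 with (n−1) dividing q²−1, and set k₀ = ⌊(n+q−1)/(q+1)⌋. Assume that (n−1) does not divide k₀(q+1), that (n−1) does not divide (k₀+1)(q+1), and that 2k₀ + q ≤ n. Then there exist n' ∈ {n, n+1} and an MDS Hermitian self-orthogonal [n', k₀+2]_{q²} code (whose Hermitian dual has minimum distance k₀+3, yielding an MDS quantum code [[n', n'−2(k₀+2), k₀+3]]_q). -/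
/-!
Put `N = n - 1`. Multiply the evaluations of the polynomials of degree at most `k₀ + 1` at `0` and
at the `N`-th roots of unity by column factors with norms `-N` at `0` and `1` elsewhere. The
Hermitian product of the rows of `X ^ l` and `X ^ j` is then a geometric sum in `ζ ^ (j + q l)`, so
it vanishes as soon as `N ∤ j + q l`; the factor at `0` takes care of `j = l = 0`. Since
`N ∣ q ^ 2 - 1`, a divisibility `N ∣ j + q l` also gives `N ∣ l + q j`, and comparing sizes leaves
only `q = 5`, `N = 8`, `k₀ = 2` besides the cases excluded by hypothesis.

For that exceptional triple no generalized Reed–Solomon code with the required parameters is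
equivalent to a Hermitian self-orthogonal one. Instead, let `s ^ 2 = 2` in `𝔽₂₅`: the identity next
to the `5 × 5` circulant matrix on `(1, 1, 2s, -1 + 2s, 2s)` generates a Hermitian self-dual MDS
code of length `10`, and shortening it at one coordinate yields a `[9, 4]` code. Its minors and
Hermitian products are computed in `ℤ[√2]`, where conjugation lifts `x ↦ x ^ 5` and an element with
norm prime to `5` stays nonzero in `𝔽₂₅`.
-/

open scoped BigOperators

open Matrix

/-- The matrices generating MDS codes: any `k` columns are linearly independent. The columns are
selected in increasing order, which loses nothing because permuting them only changes the sign of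
the determinant. -/
def IsMDSMatrix {F : Type*} [Field F] {k n : ℕ} (G : Matrix (Fin k) (Fin n) F) : Prop :=
  ∀ e : Fin k → Fin n, StrictMono e → (G.submatrix id e).det ≠ 0

/-- The code generated by the rows of `G`. -/
def rowCode {F : Type*} [Field F] {k n : ℕ} (G : Matrix (Fin k) (Fin n) F) :
    Submodule F (Fin n → F) :=
  LinearMap.range G.vecMulLinear

section MinimumDistance

variable {F : Type*} [Field F]

theorem exists_mem_ne_zero_forall_eq_zero {ι : Type*} {C : Submodule F (ι → F)} (S : Finset ι)
    (hS : S.card < Module.finrank F C) : ∃ c ∈ C, c ≠ 0 ∧ ∀ i ∈ S, c i = 0 := by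
  have : FiniteDimensional F C := Module.finite_of_finrank_pos (by omega)
  let restrict : C →ₗ[F] (S → F) := (LinearMap.funLeft F F (Subtype.val : S → ι)).comp C.subtype
  obtain ⟨c, hc, hc0⟩ := (Submodule.ne_bot_iff _).1
    (LinearMap.ker_ne_bot_of_finrank_lt (f := restrict) (by simpa using hS))
  exact ⟨c, c.2, fun h => hc0 (Subtype.ext h), fun i hi => congrFun hc ⟨i, hi⟩⟩

theorem singleton_bound [DecidableEq F] {ι : Type*} [Fintype ι] {C : Submodule F (ι → F)}
    (hC : 0 < Module.finrank F C) :
    ∃ c ∈ C, c ≠ 0 ∧ hammingNorm c + Module.finrank F C ≤ Fintype.card ι + 1 := by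
  classical
  have hle : Module.finrank F C ≤ Fintype.card ι := by simpa using C.finrank_le
  obtain ⟨S, -, hS⟩ := Finset.exists_subset_card_eq
    (s := (Finset.univ : Finset ι)) (n := Module.finrank F C - 1) (by rw [Finset.card_univ]; omega)
  obtain ⟨c, hcC, hc0, hcS⟩ := exists_mem_ne_zero_forall_eq_zero (C := C) S (by omega)
  have hsupp : hammingNorm c ≤ Sᶜ.card := Finset.card_le_card fun i hi =>
    Finset.mem_compl.2 fun hiS => (Finset.mem_filter.1 hi).2 (hcS i hiS)
  rw [Finset.card_compl] at hsupp
  exact ⟨c, hcC, hc0, by omega⟩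

theorem ncard_ne_zero_eq_hammingNorm [DecidableEq F] {ι : Type*} [Fintype ι] (c : ι → F) :
    Set.ncard {i | c i ≠ 0} = hammingNorm c := by
  rw [hammingNorm, ← Set.ncard_coe_finset, Finset.coe_filter_univ]

theorem minDistEq_of_le_hammingNorm [DecidableEq F] {n d : ℕ} {C : Submodule F (Fin n → F)}
    (hC : 0 < Module.finrank F C) (hd : n + 1 ≤ Module.finrank F C + d)
    (h : ∀ c ∈ C, c ≠ 0 → d ≤ hammingNorm c) : MinDistEq C d := by
  simp only [MinDistEq, ncard_ne_zero_eq_hammingNorm]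
  obtain ⟨c, hcC, hc0, hc⟩ := singleton_bound hC
  rw [Fintype.card_fin] at hc
  exact ⟨h, c, hcC, hc0, le_antisymm (by omega) (h c hcC hc0)⟩

end MinimumDistance

namespace IsMDSMatrix

variable {F : Type*} [Field F] {k n : ℕ} {G : Matrix (Fin k) (Fin n) F}

theorem map {K : Type*} [Field K] (hG : IsMDSMatrix G) (φ : F →+* K) : IsMDSMatrix (G.map φ) := by
  intro e he
  rw [submatrix_map, ← RingHom.mapMatrix_apply, ← RingHom.map_det]
  exact (map_ne_zero φ).2 (hG e he)

theorem eq_zero_of_forall_mem_vecMul_eq_zero (hG : IsMDSMatrix G) {a : Fin k → F}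
    {S : Finset (Fin n)} (hS : S.card = k) (ha : ∀ i ∈ S, (a ᵥ* G) i = 0) : a = 0 :=
  Matrix.eq_zero_of_vecMul_eq_zero (hG _ (S.orderEmbOfFin hS).strictMono)
    (funext fun t => ha _ (S.orderEmbOfFin_mem hS t))

theorem eq_zero_of_mulVec_eq_zero_of_forall_notMem (hG : IsMDSMatrix G) {x : Fin n → F}
    {S : Finset (Fin n)} (hS : S.card = k) (hx : ∀ i ∉ S, x i = 0) (hGx : G *ᵥ x = 0) : x = 0 := by
  have hreindex (f : Fin n → F) : ∑ t, f (S.orderEmbOfFin hS t) = ∑ i ∈ S, f i :=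
    (Finset.sum_map Finset.univ (S.orderEmbOfFin hS).toEmbedding f).symm.trans
      (by rw [S.map_orderEmbOfFin_univ hS])
  have hsub : G.submatrix id (S.orderEmbOfFin hS) *ᵥ (x ∘ S.orderEmbOfFin hS) = 0 := by
    rw [← hGx]
    ext j
    exact (hreindex fun i => G j i * x i).trans
      (Finset.sum_subset S.subset_univ fun i _ hi => by rw [hx i hi, mul_zero])
  have hzero := Matrix.eq_zero_of_mulVec_eq_zero (hG _ (S.orderEmbOfFin hS).strictMono) hsub
  ext i
  by_cases hi : i ∈ S
  · obtain ⟨t, rfl⟩ : i ∈ Set.range (S.orderEmbOfFin hS) := by rwa [S.range_orderEmbOfFin hS]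
    exact congrFun hzero t
  · exact hx i hi

theorem vecMulLinear_injective (hG : IsMDSMatrix G) (hkn : k ≤ n) :
    Function.Injective G.vecMulLinear := by
  obtain ⟨S, -, hS⟩ := Finset.exists_subset_card_eq
    (s := (Finset.univ : Finset (Fin n))) (n := k) (by simpa using hkn)
  exact (injective_iff_map_eq_zero _).2 fun a ha =>
    hG.eq_zero_of_forall_mem_vecMul_eq_zero hS fun i _ => congrFun ha i

theorem finrank_rowCode (hG : IsMDSMatrix G) (hkn : k ≤ n) :
    Module.finrank F (rowCode G) = k := by
  rw [rowCode, LinearMap.finrank_range_of_inj (hG.vecMulLinear_injective hkn),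
    Module.finrank_fin_fun]

theorem lt_hammingNorm_add_of_mem_rowCode [DecidableEq F] (hG : IsMDSMatrix G) {c : Fin n → F}
    (hc : c ∈ rowCode G) (hc0 : c ≠ 0) : n < hammingNorm c + k := by
  obtain ⟨a, rfl⟩ := hc
  contrapose! hc0
  rw [vecMulLinear_apply] at hc0 ⊢
  obtain ⟨S, hSzero, hS⟩ := Finset.exists_subset_card_eq
    (s := (Finset.univ.filter fun i => (a ᵥ* G) i ≠ 0)ᶜ) (n := k)
    (by rw [Finset.card_compl, Fintype.card_fin]; exact Nat.le_sub_of_add_le' hc0)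
  have ha : a = 0 := hG.eq_zero_of_forall_mem_vecMul_eq_zero hS fun i hi => by simpa using hSzero hi
  rw [ha, zero_vecMul]

theorem lt_hammingNorm_of_mulVec_eq_zero [DecidableEq F] (hG : IsMDSMatrix G) (hkn : k ≤ n)
    {x : Fin n → F} (hGx : G *ᵥ x = 0) (hx0 : x ≠ 0) : k < hammingNorm x := by
  contrapose! hx0
  obtain ⟨S, hsupp, hS⟩ := Finset.exists_superset_card_eq
    (s := Finset.univ.filter fun i => x i ≠ 0) (n := k) hx0 (by simpa using hkn)
  refine hG.eq_zero_of_mulVec_eq_zero_of_forall_notMem hS (fun i hi => ?_) hGx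
  by_contra hxi
  exact hi (hsupp (by simpa using hxi))

theorem minDistEq_rowCode (hG : IsMDSMatrix G) (hk : 0 < k) (hkn : k ≤ n) :
    MinDistEq (rowCode G) (n - k + 1) := by
  classical
  have hdim := hG.finrank_rowCode hkn
  refine minDistEq_of_le_hammingNorm (by omega) (by omega) fun c hc hc0 => ?_
  have := hG.lt_hammingNorm_add_of_mem_rowCode hc hc0
  omega

end IsMDSMatrix

section HermitianDual

variable {q : ℕ} {F : Type*} [Field F] {k n : ℕ} {G : Matrix (Fin k) (Fin n) F}
  {φ : F →+* F}

theorem hermDual_rowCode (hφ : ∀ x, φ x = x ^ q) (G : Matrix (Fin k) (Fin n) F) :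
    hermDual q (rowCode G) = LinearMap.ker (G.map φ).mulVecLin := by
  have hprod (x : Fin n → F) (a : Fin k → F) :
      ∑ i, x i * (a ᵥ* G) i ^ q = (φ ∘ a) ⬝ᵥ (G.map φ *ᵥ x) := by
    simp only [← hφ, RingHom.map_vecMul, dotProduct_mulVec]
    exact dotProduct_comm _ _
  ext x
  constructor
  · intro hx
    ext j
    have hrow := hx _ ⟨Pi.single j 1, rfl⟩
    rw [vecMulLinear_apply, hprod] at hrow
    simpa [Pi.single_apply, Function.comp_def, apply_ite φ, dotProduct] using hrow
  · rintro hx _ ⟨a, rfl⟩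
    rw [vecMulLinear_apply, hprod, show G.map φ *ᵥ x = 0 from hx, dotProduct_zero]

theorem isHermSelfOrth_rowCode (hφ : ∀ x, φ x = x ^ q) (hG : G.map φ * Gᵀ = 0) :
    IsHermSelfOrth q (rowCode G) := by
  suffices rowCode G ≤ hermDual q (rowCode G) from this
  rw [hermDual_rowCode hφ]
  rintro _ ⟨a, rfl⟩
  rw [LinearMap.mem_ker, mulVecLin_apply, vecMulLinear_apply, ← mulVec_transpose, mulVec_mulVec,
    hG, zero_mulVec]

theorem IsMDSMatrix.minDistEq_hermDual (hG : IsMDSMatrix G) (hφ : ∀ x, φ x = x ^ q)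
    (hkn : k < n) : MinDistEq (hermDual q (rowCode G)) (k + 1) := by
  classical
  rw [hermDual_rowCode hφ]
  have hrank := (G.map φ).mulVecLin.finrank_range_add_finrank_ker
  have hrange := (LinearMap.range (G.map φ).mulVecLin).finrank_le
  rw [Module.finrank_fin_fun] at hrank hrange
  exact minDistEq_of_le_hammingNorm (by omega) (by omega) fun x hx hx0 =>
    (hG.map φ).lt_hammingNorm_of_mulVec_eq_zero hkn.le hx hx0

end HermitianDual

section GRS

variable {F : Type*} [Field F] {n : ℕ}

/-- The generator matrix of the `k`-dimensional generalized Reed–Solomon code with evaluation points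
`x` and column multipliers `w`. -/
def grsMatrix (k : ℕ) (x w : Fin n → F) : Matrix (Fin k) (Fin n) F :=
  of fun j i => w i * x i ^ (j : ℕ)

theorem isMDSMatrix_grsMatrix (k : ℕ) {x w : Fin n → F} (hx : Function.Injective x)
    (hw : ∀ i, w i ≠ 0) : IsMDSMatrix (grsMatrix k x w) := by
  intro e he
  have hfactor : (grsMatrix k x w).submatrix id e =
      (vandermonde (x ∘ e))ᵀ * diagonal (w ∘ e) := by
    ext j t
    rw [mul_diagonal]
    exact mul_comm _ _
  rw [hfactor, det_mul, det_transpose, det_diagonal]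
  exact mul_ne_zero (det_vandermonde_ne_zero_iff.2 (hx.comp he.injective))
    (Finset.prod_ne_zero_iff.2 fun t _ => hw (e t))

theorem grsMatrix_map_mul_transpose_apply {q k : ℕ} {φ : F →+* F} (hφ : ∀ x, φ x = x ^ q)
    (x w : Fin n → F) (l j : Fin k) :
    ((grsMatrix k x w).map φ * (grsMatrix k x w)ᵀ) l j =
      ∑ i, w i ^ (q + 1) * x i ^ (j + q * l : ℕ) := by
  simp only [mul_apply, map_apply, transpose_apply, grsMatrix, of_apply, hφ]
  exact Finset.sum_congr rfl fun i _ => by ring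

end GRS

section RootsOfUnity

theorem sum_pow_mul_eq_zero_of_not_dvd {R : Type*} [CommRing R] [IsDomain R] {ζ : R} {N m : ℕ}
    (hζ : IsPrimitiveRoot ζ N) (hm : ¬ N ∣ m) : ∑ t : Fin N, (ζ ^ (t : ℕ)) ^ m = 0 := by
  have hgeom := geom_sum_mul (ζ ^ m) N
  rw [pow_right_comm, hζ.pow_eq_one, one_pow, sub_self] at hgeom
  have hsum := (mul_eq_zero.1 hgeom).resolve_right
    (sub_ne_zero.2 fun h => hm ((hζ.pow_eq_one_iff_dvd m).1 h))
  rw [Finset.sum_range] at hsum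
  simpa only [pow_right_comm ζ] using hsum

variable {F : Type*} [Field F] [Fintype F]

variable (F) in
theorem exists_isPrimitiveRoot_card_sub_one : ∃ ζ : F, IsPrimitiveRoot ζ (Fintype.card F - 1) := by
  classical
  obtain ⟨g, hg⟩ := IsCyclic.exists_ofOrder_eq_natCard (α := Fˣ)
  rw [Nat.card_eq_fintype_card, Fintype.card_units] at hg
  exact ⟨g, IsPrimitiveRoot.coe_units_iff.2 (hg ▸ IsPrimitiveRoot.orderOf g)⟩

theorem exists_isPrimitiveRoot_of_dvd {N : ℕ} (hN : N ∣ Fintype.card F - 1) :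
    ∃ ζ : F, IsPrimitiveRoot ζ N := by
  obtain ⟨ζ, hζ⟩ := exists_isPrimitiveRoot_card_sub_one F
  obtain ⟨c, hc⟩ := hN
  exact ⟨ζ ^ c, hζ.pow (Nat.sub_pos_of_lt Fintype.one_lt_card) (by rw [hc, mul_comm])⟩

theorem exists_pow_eq_of_pow_eq_one {a b : ℕ} (hab : a * b = Fintype.card F - 1) {u : F}
    (hu : u ^ b = 1) : ∃ v : F, v ^ a = u := by
  have hpos : 0 < a * b := hab ▸ Nat.sub_pos_of_lt Fintype.one_lt_card
  obtain ⟨ζ, hζ⟩ := exists_isPrimitiveRoot_card_sub_one F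
  rw [← hab] at hζ
  have : NeZero (a * b) := ⟨hpos.ne'⟩
  obtain ⟨m, -, rfl⟩ := hζ.eq_pow_of_pow_eq_one (ξ := u) (by rw [mul_comm, pow_mul, hu, one_pow])
  rw [← pow_mul, hζ.pow_eq_one_iff_dvd] at hu
  obtain ⟨c, rfl⟩ := Nat.dvd_of_mul_dvd_mul_right (Nat.pos_of_mul_pos_left hpos) hu
  exact ⟨ζ ^ c, by rw [← pow_mul, mul_comm]⟩

theorem exists_pow_add_one_eq {q : ℕ} (hF : Fintype.card F = q ^ 2) {u : F} (hu : u ≠ 0)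
    (huq : u ^ q = u) : ∃ v : F, v ^ (q + 1) = u := by
  have hq : 0 < q := Nat.pos_of_ne_zero (by rintro rfl; simp at hF)
  refine exists_pow_eq_of_pow_eq_one (b := q - 1) (by rw [hF, ← Nat.sq_sub_sq, one_pow]) ?_
  refine mul_right_cancel₀ hu ?_
  rw [← pow_succ, Nat.sub_add_cancel hq, huq, one_mul]

theorem isPrimePow_of_card_eq_sq {q : ℕ} (hF : Fintype.card F = q ^ 2) : IsPrimePow q :=
  (isPrimePow_pow_iff two_ne_zero).1 (hF ▸ Fintype.isPrimePow_card_of_field)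

theorem exists_ringHom_eq_pow {q : ℕ} (hF : Fintype.card F = q ^ 2) :
    ∃ φ : F →+* F, ∀ x, φ x = x ^ q := by
  obtain ⟨p, m, hp, -, rfl⟩ := isPrimePow_of_card_eq_sq hF
  have : Fact p.Prime := ⟨hp.nat_prime⟩
  have : CharP F p := charP_of_card_eq_prime_pow (f := m * 2) (by rw [hF, pow_mul])
  exact ⟨iterateFrobenius F p m, iterateFrobenius_def p m⟩

end RootsOfUnity

theorem exists_grsMatrix_isMDSMatrix_hermitian {q N k : ℕ} {F : Type*} [Field F] [Fintype F]
    (hF : Fintype.card F = q ^ 2) (hN : N ∣ q ^ 2 - 1) {φ : F →+* F} (hφ : ∀ x, φ x = x ^ q)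
    (hndvd : ∀ i < k, ∀ j < k, i ≠ 0 ∨ j ≠ 0 → ¬ N ∣ i + q * j) :
    ∃ x w : Fin (N + 1) → F, IsMDSMatrix (grsMatrix k x w) ∧
      (grsMatrix k x w).map φ * (grsMatrix k x w)ᵀ = 0 := by
  have hq : 1 < q := (isPrimePow_of_card_eq_sq hF).one_lt
  have : NeZero N := ⟨fun h => (Nat.sub_pos_of_lt (Nat.one_lt_pow two_ne_zero hq)).ne'
    (zero_dvd_iff.1 (h ▸ hN))⟩
  obtain ⟨ζ, hζ⟩ := exists_isPrimitiveRoot_of_dvd (hF.symm ▸ hN)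
  have hN0 : (-N : F) ≠ 0 := neg_ne_zero.2 hζ.neZero'.out
  obtain ⟨v, hv⟩ := exists_pow_add_one_eq hF hN0 (by rw [← hφ, map_neg, map_natCast])
  have hv0 : v ≠ 0 := (pow_ne_zero_iff q.succ_ne_zero).1 (hv ▸ hN0)
  have hx : Function.Injective (Fin.cons 0 fun t : Fin N => ζ ^ (t : ℕ) : Fin (N + 1) → F) :=
    Fin.cons_injective_iff.2 ⟨fun ⟨_, ht⟩ => pow_ne_zero _ (hζ.ne_zero (NeZero.ne N)) ht,
      fun s t hst => Fin.ext (hζ.pow_inj s.2 t.2 hst)⟩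
  have hw (i) : (Fin.cons v fun _ => 1 : Fin (N + 1) → F) i ≠ 0 := by
    cases i using Fin.cases <;> simp [hv0]
  refine ⟨_, _, isMDSMatrix_grsMatrix k hx hw, ?_⟩
  ext l j
  rw [grsMatrix_map_mul_transpose_apply hφ, Fin.sum_univ_succ]
  simp only [Fin.cons_zero, Fin.cons_succ, one_pow, one_mul, hv, Matrix.zero_apply]
  by_cases h0 : (j : ℕ) ≠ 0 ∨ (l : ℕ) ≠ 0
  · have hexp : (j + q * l : ℕ) ≠ 0 := by
      rcases h0 with h | h
      · omega
      · exact (Nat.add_pos_right _ (Nat.mul_pos (by omega) (by omega))).ne'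
    rw [zero_pow hexp, mul_zero, zero_add,
      sum_pow_mul_eq_zero_of_not_dvd hζ (hndvd j j.2 l l.2 h0)]
  · obtain ⟨hj, hl⟩ : (j : ℕ) = 0 ∧ (l : ℕ) = 0 := by omega
    simp [hj, hl]

section Exponents

variable {q N k i j : ℕ}

theorem dvd_add_mul_swap (hq : 0 < q) (hN : N ∣ q ^ 2 - 1) (h : N ∣ i + q * j) :
    N ∣ j + q * i := by
  have key : q * (i + q * j) = (j + q * i) + (q ^ 2 - 1) * j := by
    zify [Nat.one_le_pow 2 q hq]
    ring
  exact (Nat.dvd_add_left (hN.mul_right j)).1 (key ▸ h.mul_left q)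

-- Here `k` plays the role of `k₀ - 1 = ⌈N / (q + 1)⌉ - 1`, whence `k * (q + 1) < N`.
theorem eq_five_of_dvd_of_lt (hq : 2 ≤ q) (hk : k * (q + 1) < N) (hN : 2 * k + 5 ≤ N)
    (hj : j ≤ k + 2) (hij : i < j) (h : N ∣ i + q * j) (h' : N ∣ j + q * i) :
    q = 5 ∧ N = 8 ∧ k = 1 := by
  have hki : k ≤ i := by
    have hle : N ≤ j + q * i := Nat.le_of_dvd (by omega) h'
    by_contra! hik
    nlinarith [Nat.mul_le_mul_left q hik]
  obtain ⟨r, rfl⟩ : ∃ r, q = r + 1 := ⟨q - 1, by omega⟩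
  obtain ⟨d, rfl⟩ : ∃ d, j = i + d := ⟨j - i, by omega⟩
  have hdiff : N ∣ d * r := by
    have key : i + (r + 1) * (i + d) = d * r + (i + d + (r + 1) * i) := by ring
    exact (Nat.dvd_add_left h').1 (key ▸ h)
  have hle : N ≤ d * r := Nat.le_of_dvd (Nat.mul_pos (by omega) (by omega)) hdiff
  obtain rfl | rfl : d = 1 ∨ d = 2 := by omega
  · obtain rfl : k = 0 := by
      by_contra! hk0
      nlinarith [Nat.pos_of_ne_zero hk0]
    have h3 : N ∣ 3 := by
      obtain rfl | rfl : i = 0 ∨ i = 1 := by omega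
      · exact h'.trans (by simp)
      · have key : 1 + 1 + (r + 1) * 1 = 3 + 1 * r := by ring
        exact (Nat.dvd_add_left hdiff).1 (key ▸ h')
    have := Nat.le_of_dvd (by omega) h3
    omega
  · obtain rfl : i = k := by omega
    have hi2 : i < 2 := by
      by_contra! hi2
      nlinarith
    interval_cases i
    · have := Nat.le_of_dvd (by omega) (by simpa using h' : N ∣ 2)
      omega
    · have h8 : N ∣ 8 := by
        have key : 2 * (1 + 2 + (r + 1) * 1) = 8 + 2 * r := by ring
        exact (Nat.dvd_add_left hdiff).1 (key ▸ h'.mul_left 2)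
      obtain rfl : N = 8 := by
        have := Nat.le_of_dvd (by omega) h8
        interval_cases N <;> omega
      omega

theorem eq_five_of_dvd (hq : 2 ≤ q) (hdvd : N ∣ q ^ 2 - 1) (hk : k * (q + 1) < N)
    (h1 : ¬ N ∣ (k + 1) * (q + 1)) (h2 : ¬ N ∣ (k + 2) * (q + 1)) (hN : 2 * k + 5 ≤ N)
    (hi : i ≤ k + 2) (hj : j ≤ k + 2) (h0 : i ≠ 0 ∨ j ≠ 0) (h : N ∣ i + q * j) :
    q = 5 ∧ N = 8 ∧ k = 1 := by
  have h' := dvd_add_mul_swap (by omega) hdvd h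
  rcases lt_trichotomy i j with hij | rfl | hij
  · exact eq_five_of_dvd_of_lt hq hk hN hj hij h h'
  · rw [show i + q * i = i * (q + 1) by ring] at h
    have hle := Nat.le_of_dvd (Nat.mul_pos (by omega) (by omega)) h
    have hki : k < i := lt_of_mul_lt_mul_right (hk.trans_le hle) (Nat.zero_le _)
    obtain rfl | rfl : i = k + 1 ∨ i = k + 2 := by omega
    · exact absurd h h1
    · exact absurd h h2
  · exact eq_five_of_dvd_of_lt hq hk hN hi hij h' h

theorem four_le_of_not_dvd (hq : 2 ≤ q) (hN : N ∣ q ^ 2 - 1) (h1 : ¬ N ∣ k * (q + 1))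
    (h2 : ¬ N ∣ (k + 1) * (q + 1)) : 4 ≤ q := by
  by_contra! hlt
  interval_cases q
  · exact h1 (hN.trans (Dvd.intro_left k rfl))
  · obtain ⟨c, hc⟩ | ⟨c, hc⟩ := Nat.even_or_odd k
    · exact h1 (hN.trans ⟨c, by omega⟩)
    · exact h2 (hN.trans ⟨c + 1, by omega⟩)

end Exponents

section Zsqrtd

variable {R : Type*} [CommRing R] {d : ℤ}

theorem dvd_norm_of_map_eq_zero {p : ℕ} [CharP R p] (ψ : ℤ√d →+* R) {z : ℤ√d} (hz : ψ z = 0) :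
    (p : ℤ) ∣ z.norm := by
  rw [← CharP.intCast_eq_zero_iff R p, ← map_intCast ψ, Zsqrtd.norm_eq_mul_conj, map_mul, hz,
    zero_mul]

theorem map_eq_zero_of_intCast_dvd {p : ℕ} [CharP R p] (ψ : ℤ√d →+* R) {z : ℤ√d}
    (hz : ((p : ℤ) : ℤ√d) ∣ z) : ψ z = 0 := by
  obtain ⟨y, rfl⟩ := hz
  simp

theorem map_pow_eq_map_star {p : ℕ} [Fact p.Prime] [CharP R p] (ψ : ℤ√d →+* R)
    (hψ : ψ Zsqrtd.sqrtd ^ p = -ψ Zsqrtd.sqrtd) (z : ℤ√d) : ψ z ^ p = ψ (star z) := by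
  obtain ⟨x, y⟩ := z
  rw [← frobenius_def] at hψ ⊢
  rw [Zsqrtd.star_mk, Zsqrtd.decompose, Zsqrtd.decompose]
  simp only [map_add, map_mul, map_intCast, hψ]
  push_cast
  ring

end Zsqrtd

/-- A lift to `ℤ[√2]` of the generator matrix of the exceptional `[9, 4]` code over `𝔽₂₅`. -/
def exceptionalMatrix : Matrix (Fin 4) (Fin 9) (ℤ√2) :=
  !![1, 0, 0, 0, 1, 1, ⟨0, 2⟩, ⟨-1, 2⟩, ⟨0, 2⟩;
     0, 1, 0, 0, ⟨0, 2⟩, 1, 1, ⟨0, 2⟩, ⟨-1, 2⟩;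
     0, 0, 1, 0, ⟨-1, 2⟩, ⟨0, 2⟩, 1, 1, ⟨0, 2⟩;
     0, 0, 0, 1, ⟨0, 2⟩, ⟨-1, 2⟩, ⟨0, 2⟩, 1, 1]

theorem not_five_dvd_norm_det_exceptionalMatrix :
    ∀ a b, a < b → ∀ c, b < c → ∀ d, c < d →
      ¬ (5 : ℤ) ∣ (exceptionalMatrix.submatrix id ![a, b, c, d]).det.norm := by
  decide +kernel

theorem five_dvd_exceptionalMatrix_map_star_mul_transpose :
    ∀ l j, ((5 : ℤ) : ℤ√2) ∣ (exceptionalMatrix.map star * exceptionalMatrixᵀ) l j := by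
  simp only [Zsqrtd.intCast_dvd]
  decide +kernel

theorem exists_ringHom_zsqrtd_two {F : Type*} [Field F] [Fintype F] (hF : Fintype.card F = 5 ^ 2) :
    ∃ ψ : ℤ√2 →+* F, ∀ z, ψ z ^ 5 = ψ (star z) := by
  have : Fact (Nat.Prime 5) := ⟨by norm_num⟩
  have : CharP F 5 := charP_of_card_eq_prime_pow (f := 2) hF
  have h5 : (5 : F) = 0 := CharP.ofNat_eq_zero F 5
  obtain ⟨s, hs⟩ := exists_pow_eq_of_pow_eq_one (a := 2) (b := 12) (u := (2 : F)) (by simp [hF])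
    (by linear_combination 819 * h5)
  let ψ : ℤ√2 →+* F := Zsqrtd.lift ⟨s, by rw [← sq, hs, Int.cast_ofNat]⟩
  have hroot : ψ Zsqrtd.sqrtd = s := by simp [ψ]
  refine ⟨ψ, map_pow_eq_map_star ψ ?_⟩
  rw [hroot]
  linear_combination s * (s ^ 2 + 2) * hs + s * h5

theorem exists_isMDSMatrix_hermitian_five {F : Type*} [Field F] [Fintype F]
    (hF : Fintype.card F = 5 ^ 2) {φ : F →+* F} (hφ : ∀ x, φ x = x ^ 5) :
    ∃ G : Matrix (Fin 4) (Fin 9) F, IsMDSMatrix G ∧ G.map φ * Gᵀ = 0 := by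
  have : Fact (Nat.Prime 5) := ⟨by norm_num⟩
  have : CharP F 5 := charP_of_card_eq_prime_pow (f := 2) hF
  obtain ⟨ψ, hψ⟩ := exists_ringHom_zsqrtd_two hF
  refine ⟨exceptionalMatrix.map ψ, fun e he hdet => ?_, ?_⟩
  · rw [submatrix_map, ← RingHom.mapMatrix_apply, ← RingHom.map_det] at hdet
    refine not_five_dvd_norm_det_exceptionalMatrix (e 0) (e 1) (he (by decide)) (e 2)
      (he (by decide)) (e 3) (he (by decide)) ?_
    rw [show ![e 0, e 1, e 2, e 3] = e from List.ofFn_inj.1 rfl]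
    exact dvd_norm_of_map_eq_zero ψ hdet
  · have hstar : (exceptionalMatrix.map ψ).map φ = (exceptionalMatrix.map star).map ψ := by
      ext l j
      simp only [map_apply, hφ, hψ]
    rw [hstar, ← transpose_map, ← Matrix.map_mul]
    ext l j
    exact map_eq_zero_of_intCast_dvd ψ (five_dvd_exceptionalMatrix_map_star_mul_transpose l j)

theorem stmt16_general (q n k₀ : ℕ) (hdvd : (n - 1) ∣ q ^ 2 - 1)
    (hk₀ : k₀ = (n + q - 1) / (q + 1))
    (h1 : ¬ (n - 1) ∣ k₀ * (q + 1))
    (h2 : ¬ (n - 1) ∣ (k₀ + 1) * (q + 1))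
    (h3 : 2 * (k₀ + 2) ≤ n)
    (F : Type*) [Field F] [Fintype F] (hF : Fintype.card F = q ^ 2) :
    ∃ C : Submodule F (Fin n → F),
      Module.finrank F C = k₀ + 2 ∧ IsHermSelfOrth q C ∧
      MinDistEq C (n - (k₀ + 2) + 1) ∧ MinDistEq (hermDual q C) (k₀ + 3) := by
  obtain ⟨N, rfl⟩ : ∃ N, n = N + 1 := ⟨n - 1, by omega⟩
  rw [Nat.add_sub_cancel] at hdvd h1 h2
  obtain ⟨k, rfl⟩ : ∃ k, k₀ = k + 1 :=
    Nat.exists_eq_succ_of_ne_zero fun h => h1 (by rw [h, zero_mul]; exact dvd_zero N)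
  have hq : 2 ≤ q := (isPrimePow_of_card_eq_sq hF).two_le
  have hk : k * (q + 1) < N := by
    have := (Nat.le_div_iff_mul_le (Nat.succ_pos q)).1 hk₀.le
    rw [Nat.succ_eq_add_one, Nat.add_one_mul] at this
    omega
  obtain ⟨φ, hφ⟩ := exists_ringHom_eq_pow hF
  obtain ⟨G, hMDS, hG⟩ : ∃ G : Matrix (Fin (k + 3)) (Fin (N + 1)) F,
      IsMDSMatrix G ∧ G.map φ * Gᵀ = 0 := by
    by_cases hex : q = 5 ∧ N = 8 ∧ k = 1
    · obtain ⟨rfl, rfl, rfl⟩ := hex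
      exact exists_isMDSMatrix_hermitian_five hF hφ
    · obtain ⟨x, w, hxw⟩ := exists_grsMatrix_isMDSMatrix_hermitian hF hdvd hφ
        fun i hi j hj h0 h => hex (eq_five_of_dvd hq hdvd hk h1 h2 (by omega)
          (Nat.le_of_lt_succ hi) (Nat.le_of_lt_succ hj) h0 h)
      exact ⟨grsMatrix (k + 3) x w, hxw⟩
  exact ⟨rowCode G, hMDS.finrank_rowCode (by omega), isHermSelfOrth_rowCode hφ hG,
    hMDS.minDistEq_rowCode (by omega) (by omega), hMDS.minDistEq_hermDual hφ (by omega)⟩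

/-- The 'Moreover' part of the main MDS quantum theorem (classical form): for
`(n−1) ∣ q²−1` and `k₀ = ⌊(n+q−1)/(q+1)⌋`, if `(n−1) ∤ k₀(q+1)`,
`(n−1) ∤ (k₀+1)(q+1)` and `2k₀ + q ≤ n`, then for some `n' ∈ {n, n+1}` there is an
MDS Hermitian self-orthogonal `[n', k₀+2]_{q²}` code whose Hermitian dual has
minimum distance `k₀+3`. -/
theorem stmt16 (q n : ℕ) (hq : IsPrimePow q) (hn : 2 ≤ n)
    (hdvd : (n - 1) ∣ q ^ 2 - 1)
    (k₀ : ℕ) (hk₀ : k₀ = (n + q - 1) / (q + 1))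
    (h1 : ¬ (n - 1) ∣ k₀ * (q + 1))
    (h2 : ¬ (n - 1) ∣ (k₀ + 1) * (q + 1))
    (h3 : 2 * k₀ + q ≤ n)
    (F : Type*) [Field F] [Fintype F] (hF : Fintype.card F = q ^ 2) :
    ∃ n' : ℕ, (n' = n ∨ n' = n + 1) ∧
      ∃ C : Submodule F (Fin n' → F),
        Module.finrank F C = k₀ + 2 ∧ IsHermSelfOrth q C ∧
        MinDistEq C (n' - (k₀ + 2) + 1) ∧
        MinDistEq (hermDual q C) (k₀ + 3) := by
  have h4 := four_le_of_not_dvd hq.two_le hdvd h1 h2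
  exact ⟨n, Or.inl rfl, stmt16_general q n k₀ hdvd hk₀ h1 h2 (by omega) F hF⟩
end

section
/- Let q be an odd prime power and let t be a positive integer such that gcd(t, q+1) divides (q+1)/2. Then the number of elements α ∈ 𝔽_{q²} satisfying α^{t(q−1)} = −1 equals gcd(t(q−1), (q+1)(q−1)); moreover gcd(t(q−1), (q+1)(q−1)/2) = gcd(t(q−1), (q+1)(q−1)). -/
/-!
In a finite cyclic group `G`, the `n`-th powers are exactly the elements killed by
`|G| / gcd(|G|, n)`: one inclusion is Lagrange, and the two subgroups have the same order. Every
`n`-th power has `gcd(|G|, n)` roots, a coset of the kernel of `x ↦ x ^ n`. For `G = 𝔽_{q²}^*` and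
`n = t(q-1)`, the divisibility hypothesis multiplied by `q - 1` says that `gcd(|G|, n)` divides
`|G| / 2`; hence `|G| / gcd(|G|, n)` is even and kills `-1`.
-/

section CyclicGroup

variable {G : Type*} [CommGroup G] [IsCyclic G] [Finite G]

theorem range_powMonoidHom_eq_ker (n : ℕ) :
    (powMonoidHom n : G →* G).range =
      (powMonoidHom (Nat.card G / (Nat.card G).gcd n) : G →* G).ker := by
  refine Subgroup.eq_of_le_of_card_ge ?_ ?_
  · rintro _ ⟨x, rfl⟩
    have hdvd : Nat.card G ∣ n * (Nat.card G / (Nat.card G).gcd n) := by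
      rw [← Nat.mul_div_assoc n (Nat.gcd_dvd_left _ _), mul_comm n]
      exact Nat.dvd_lcm_left (Nat.card G) n
    rw [MonoidHom.mem_ker, powMonoidHom_apply, powMonoidHom_apply, ← pow_mul]
    exact orderOf_dvd_iff_pow_eq_one.mp ((orderOf_dvd_natCard x).trans hdvd)
  · rw [IsCyclic.card_powMonoidHom_ker, IsCyclic.card_powMonoidHom_range,
      Nat.gcd_eq_right (Nat.div_dvd_of_dvd (Nat.gcd_dvd_left _ _))]

theorem exists_pow_eq_iff_pow_card_div_gcd_eq_one {n : ℕ} {a : G} :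
    (∃ x, x ^ n = a) ↔ a ^ (Nat.card G / (Nat.card G).gcd n) = 1 := by
  simpa only [MonoidHom.mem_range, MonoidHom.mem_ker, powMonoidHom_apply] using
    SetLike.ext_iff.mp (range_powMonoidHom_eq_ker n) a

theorem ncard_setOf_pow_eq_pow (n : ℕ) (b : G) :
    {x : G | x ^ n = b ^ n}.ncard = (Nat.card G).gcd n := by
  rw [← IsCyclic.card_powMonoidHom_ker G n, ← Nat.card_coe_set_eq]
  exact Nat.card_congr ((powMonoidHom n).fiberEquivKer b)

end CyclicGroup

theorem image_unitsVal_setOf_pow_eq {M : Type*} [Monoid M] {n : ℕ} (hn : n ≠ 0) (u : Mˣ) :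
    Units.val '' {x : Mˣ | x ^ n = u} = {x : M | x ^ n = u} := by
  ext x
  constructor
  · rintro ⟨v, rfl, rfl⟩
    exact (Units.val_pow_eq_pow_val v n).symm
  · intro hx
    have hunit : IsUnit x := (isUnit_pow_iff hn).mp ⟨u, hx.symm⟩
    lift x to Mˣ using hunit
    exact ⟨x, Units.ext hx, rfl⟩

theorem ncard_setOf_pow_eq_unit {M : Type*} [CommMonoid M] [IsCyclic Mˣ] [Finite Mˣ] {n : ℕ}
    (hn : n ≠ 0) {u : Mˣ} (hu : u ^ (Nat.card Mˣ / (Nat.card Mˣ).gcd n) = 1) :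
    {x : M | x ^ n = u}.ncard = (Nat.card Mˣ).gcd n := by
  obtain ⟨v, rfl⟩ := exists_pow_eq_iff_pow_card_div_gcd_eq_one.mpr hu
  rw [← image_unitsVal_setOf_pow_eq hn, Set.ncard_image_of_injective _ Units.val_injective,
    ncard_setOf_pow_eq_pow]

theorem ncard_setOf_pow_eq_neg_one {R : Type*} [CommRing R] [IsCyclic Rˣ] [Finite Rˣ] {n : ℕ}
    (h : Even (Nat.card Rˣ / (Nat.card Rˣ).gcd n)) :
    {x : R | x ^ n = -1}.ncard = (Nat.card Rˣ).gcd n := by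
  have hn : n ≠ 0 := by
    rintro rfl
    rw [Nat.gcd_zero_right, Nat.div_self Nat.card_pos] at h
    exact Nat.not_even_one h
  simpa only [Units.val_neg, Units.val_one] using
    ncard_setOf_pow_eq_unit (u := (-1 : Rˣ)) hn h.neg_one_pow

theorem even_div_of_dvd_half {d k : ℕ} (hk : Even k) (hd : d ∣ k / 2) : Even (k / d) := by
  rw [← Nat.two_mul_div_two_of_even hk, Nat.mul_div_assoc 2 hd]
  exact even_two_mul _

theorem gcd_mul_right_dvd_half {n k : ℕ} (hk : Even k) (h : n.gcd k ∣ k / 2) (r : ℕ) :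
    (n * r).gcd (k * r) ∣ k * r / 2 := by
  rw [Nat.gcd_mul_right, ← Nat.div_mul_right_comm hk.two_dvd]
  exact Nat.mul_dvd_mul_right h r

theorem gcd_eq_gcd_of_dvd_of_gcd_dvd {n m k : ℕ} (hmk : m ∣ k) (h : n.gcd k ∣ m) :
    n.gcd m = n.gcd k :=
  Nat.dvd_antisymm (Nat.gcd_dvd_gcd_of_dvd_right n hmk) (Nat.dvd_gcd (Nat.gcd_dvd_left n k) h)

/-- For `q` an odd prime power and `gcd(t, q+1) ∣ (q+1)/2`, the number of
`α ∈ 𝔽_{q²}` with `α^{t(q−1)} = −1` equals `gcd(t(q−1), (q+1)(q−1))`; moreover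
`gcd(t(q−1), (q+1)(q−1)/2) = gcd(t(q−1), (q+1)(q−1))`. -/
theorem stmt17 (q : ℕ) (hq : IsPrimePow q) (hodd : Odd q)
    (t : ℕ) (ht : 0 < t) (hgcd : Nat.gcd t (q + 1) ∣ (q + 1) / 2)
    (F : Type*) [Field F] [Fintype F] (hF : Fintype.card F = q ^ 2) :
    Set.ncard {α : F | α ^ (t * (q - 1)) = -1} =
      Nat.gcd (t * (q - 1)) ((q + 1) * (q - 1)) ∧
    Nat.gcd (t * (q - 1)) ((q + 1) * (q - 1) / 2) =
      Nat.gcd (t * (q - 1)) ((q + 1) * (q - 1)) := by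
  have heven : Even (q + 1) := hodd.add_one
  have hdvd : (t * (q - 1)).gcd ((q + 1) * (q - 1)) ∣ (q + 1) * (q - 1) / 2 :=
    gcd_mul_right_dvd_half heven hgcd (q - 1)
  have hcard : Nat.card Fˣ = (q + 1) * (q - 1) := by
    rw [Nat.card_units, Nat.card_eq_fintype_card, hF, ← Nat.sq_sub_sq, one_pow]
  constructor
  · rw [Nat.gcd_comm, ← hcard] at hdvd ⊢
    exact ncard_setOf_pow_eq_neg_one
      (even_div_of_dvd_half (hcard ▸ heven.mul_right (q - 1)) hdvd)
  · exact gcd_eq_gcd_of_dvd_of_gcd_dvd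
      (Nat.div_dvd_of_dvd (heven.mul_right (q - 1)).two_dvd) hdvd
end
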